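/- Let L > 0, T > 0 and fix feedback gains α, β with 0 < |α| < 1 and β > 0. There exists a constant C > 0, depending only on L, T, α and β, such that every classical solution u of the closed-loop linear KP-II system on [0,L]² × [0,T] satisfies the Kato smoothing estimate ∫₀^T ∫_Ω ( u(x,y,t)² + u_x(x,y,t)² ) dx dy dt ≤ C ∫_Ω u(x,y,0)² dx dy. -/

import Mathlib

open MeasureTheory Real

noncomputable section

/-- Partial derivative in `x` of `u(x,y,t)`. -/
def pdx (u : ℝ → ℝ → ℝ → ℝ) (x y t : ℝ) : ℝ := deriv (fun x' => u x' y t) x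

/-- Third partial derivative in `x` of `u(x,y,t)`. -/
def pdx3 (u : ℝ → ℝ → ℝ → ℝ) (x y t : ℝ) : ℝ := iteratedDeriv 3 (fun x' => u x' y t) x

/-- Partial derivative in `y` of `u(x,y,t)`. -/
def pdy (u : ℝ → ℝ → ℝ → ℝ) (x y t : ℝ) : ℝ := deriv (fun y' => u x y' t) y

/-- Second partial derivative in `y` of `u(x,y,t)`. -/
def pdy2 (u : ℝ → ℝ → ℝ → ℝ) (x y t : ℝ) : ℝ := iteratedDeriv 2 (fun y' => u x y' t) y

/-- Partial derivative in `t` of `u(x,y,t)`. -/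
def pdt (u : ℝ → ℝ → ℝ → ℝ) (x y t : ℝ) : ℝ := deriv (fun t' => u x y t') t

/-- The nonlocal operator `(∂ₓ⁻¹ w)(x,y) = -∫ₓ^L w(s,y) ds`. -/
def pxInv (L : ℝ) (w : ℝ → ℝ → ℝ) (x y : ℝ) : ℝ := -(∫ s in x..L, w s y)

/-- A classical solution of the closed-loop linear KP-II system on `[0,L]² × [0,T]`:
`u` is `C³`, satisfies `u_t + u_x + u_xxx + ∂ₓ⁻¹ u_yy = 0` on `Ω × (0,T)` and the
boundary feedback conditions for all `t ∈ [0,T]`. -/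
def IsKPSolution (L T α β : ℝ) (u : ℝ → ℝ → ℝ → ℝ) : Prop :=
  ContDiff ℝ 3 (fun p : ℝ × ℝ × ℝ => u p.1 p.2.1 p.2.2) ∧
  (∀ x ∈ Set.Ioo (0:ℝ) L, ∀ y ∈ Set.Ioo (0:ℝ) L, ∀ t ∈ Set.Ioo (0:ℝ) T,
      pdt u x y t + pdx u x y t + pdx3 u x y t
        + pxInv L (fun s y' => pdy2 u s y' t) x y = 0) ∧
  (∀ y ∈ Set.Icc (0:ℝ) L, ∀ t ∈ Set.Icc (0:ℝ) T,
      u 0 y t = 0 ∧ u L y t = 0 ∧ pdx u L y t = α * pdx u 0 y t) ∧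
  (∀ x ∈ Set.Icc (0:ℝ) L, ∀ t ∈ Set.Icc (0:ℝ) T,
      pdy u x L t = β * pdx u x L t ∧ pdy u x 0 t = 0)

/-- The energy `E(t) = ½ ∫_Ω u(x,y,t)² dx dy`. -/
def energy (L : ℝ) (u : ℝ → ℝ → ℝ → ℝ) (t : ℝ) : ℝ :=
  (1/2) * ∫ x in (0:ℝ)..L, ∫ y in (0:ℝ)..L, (u x y t)^2

/-!
Multiply the equation by `2 φ(x) u` for a nonnegative nondecreasing weight `φ` and integrate over
the square. After integrations by parts in `x`, the local part `u_x + u_xxx` contributes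
`∫ (φ' + φ''') u² - 3 ∫ φ' u_x²` to the time derivative of `∫ φ u²`, plus a boundary term with the
sign of `φ(L) α² - φ(0)`. For the nonlocal part, put `V := ∂ₓ⁻¹ u_y`, so that `V_x = u_y` and
`V_y = ∂ₓ⁻¹ u_yy`; integrating by parts in `y`, then in `x`, turns `∫ 2 φ u V_y` into boundary terms
plus `∫ φ' V²`, all nonnegative because the feedback law says `V = β u` on `y = L` and `V = 0` on
`y = 0`. The weight `φ = 1` then gives decay of the `L²` norm, and `φ = x + K` with
`(L + K) α² ≤ K` bounds `3 ∫ u_x²` by quantities that the decay controls.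
-/

open Function Set

section IntervalIntegral

variable {E : Type*} [NormedAddCommGroup E] [NormedSpace ℝ E]

theorem hasDerivAt_intervalIntegral_of_continuous {f f' : ℝ → ℝ → E}
    (hf : Continuous (uncurry f)) (hf' : Continuous (uncurry f'))
    (h : ∀ t s, HasDerivAt (fun t ↦ f t s) (f' t s) t) (a b t : ℝ) :
    HasDerivAt (fun t ↦ ∫ s in a..b, f t s) (∫ s in a..b, f' t s) t := by
  obtain ⟨B, hB⟩ := ((isCompact_Icc (a := t - 1) (b := t + 1)).prod
    (isCompact_uIcc (a := a) (b := b))).exists_bound_of_continuousOn hf'.continuousOn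
  refine (intervalIntegral.hasDerivAt_integral_of_dominated_loc_of_deriv_le
    (bound := fun _ ↦ B) (Icc_mem_nhds (sub_one_lt t) (lt_add_one t))
    (.of_forall fun r ↦ ?_) ?_ ?_ ?_ intervalIntegrable_const (.of_forall fun s _ r _ ↦ h r s)).2
  · exact (by fun_prop : Continuous (f r)).aestronglyMeasurable
  · exact (by fun_prop : Continuous (f t)).intervalIntegrable _ _
  · exact (by fun_prop : Continuous (f' t)).aestronglyMeasurable
  · exact .of_forall fun s hs r hr ↦ hB (r, s) ⟨hr, uIoc_subset_uIcc hs⟩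

theorem intervalIntegral_swap_of_continuous {f : ℝ → ℝ → E} (hf : Continuous (uncurry f))
    (a b c d : ℝ) :
    ∫ x in a..b, ∫ y in c..d, f x y = ∫ y in c..d, ∫ x in a..b, f x y :=
  intervalIntegral_intervalIntegral_swap
    ((hf.continuousOn.integrableOn_compact (isCompact_uIcc.prod isCompact_uIcc)).mono_set
      (prod_mono uIoc_subset_uIcc uIoc_subset_uIcc))

theorem intervalIntegral₂_add {f g : ℝ → ℝ → E} (hf : Continuous (uncurry f))
    (hg : Continuous (uncurry g)) (a b c d : ℝ) :
    ∫ x in a..b, ∫ y in c..d, (f x y + g x y) =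
      (∫ x in a..b, ∫ y in c..d, f x y) + ∫ x in a..b, ∫ y in c..d, g x y := by
  rw [← intervalIntegral.integral_add
    (Continuous.intervalIntegrable (by fun_prop) _ _)
    (Continuous.intervalIntegrable (by fun_prop) _ _)]
  congr 1 with x
  exact intervalIntegral.integral_add
    (Continuous.intervalIntegrable (by fun_prop) _ _)
    (Continuous.intervalIntegrable (by fun_prop) _ _)

theorem intervalIntegral₂_sub {f g : ℝ → ℝ → E} (hf : Continuous (uncurry f))
    (hg : Continuous (uncurry g)) (a b c d : ℝ) :
    ∫ x in a..b, ∫ y in c..d, (f x y - g x y) =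
      (∫ x in a..b, ∫ y in c..d, f x y) - ∫ x in a..b, ∫ y in c..d, g x y := by
  simpa only [sub_eq_add_neg, Pi.neg_apply, intervalIntegral.integral_neg] using
    intervalIntegral₂_add (g := fun x y ↦ -g x y) hf (by fun_prop) a b c d

end IntervalIntegral

section PartialDerivatives

variable {u : ℝ → ℝ → ℝ → ℝ} {n : WithTop ℕ∞}

theorem contDiff_lineDeriv {𝕜 E F : Type*} [NontriviallyNormedField 𝕜] [NormedAddCommGroup E]
    [NormedSpace 𝕜 E] [NormedAddCommGroup F] [NormedSpace 𝕜 F] {f : E → F}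
    (hf : ContDiff 𝕜 (n + 1) f) (v : E) : ContDiff 𝕜 n fun p ↦ lineDeriv 𝕜 f p v := by
  have h : ∀ p, lineDeriv 𝕜 f p v = fderiv 𝕜 f p v := fun p ↦
    (hf.differentiable (by simp) p).lineDeriv_eq_fderiv
  simpa only [h] using (hf.fderiv_right le_rfl).clm_apply contDiff_const

theorem pdx_eq_lineDeriv (u : ℝ → ℝ → ℝ → ℝ) (x y t : ℝ) :
    pdx u x y t = lineDeriv ℝ (fun p : ℝ × ℝ × ℝ ↦ u p.1 p.2.1 p.2.2) (x, y, t) (1, 0, 0) := by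
  simp [pdx, lineDeriv, deriv_comp_const_add (f := fun x' ↦ u x' y t)]

theorem pdy_eq_lineDeriv (u : ℝ → ℝ → ℝ → ℝ) (x y t : ℝ) :
    pdy u x y t = lineDeriv ℝ (fun p : ℝ × ℝ × ℝ ↦ u p.1 p.2.1 p.2.2) (x, y, t) (0, 1, 0) := by
  simp [pdy, lineDeriv, deriv_comp_const_add (f := fun y' ↦ u x y' t)]

theorem pdt_eq_lineDeriv (u : ℝ → ℝ → ℝ → ℝ) (x y t : ℝ) :
    pdt u x y t = lineDeriv ℝ (fun p : ℝ × ℝ × ℝ ↦ u p.1 p.2.1 p.2.2) (x, y, t) (0, 0, 1) := by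
  simp [pdt, lineDeriv, deriv_comp_const_add (f := fun t' ↦ u x y t')]

theorem contDiff_pdx (hu : ContDiff ℝ (n + 1) fun p : ℝ × ℝ × ℝ ↦ u p.1 p.2.1 p.2.2) :
    ContDiff ℝ n fun p : ℝ × ℝ × ℝ ↦ pdx u p.1 p.2.1 p.2.2 := by
  simpa only [pdx_eq_lineDeriv] using contDiff_lineDeriv hu (1, 0, 0)

theorem contDiff_pdy (hu : ContDiff ℝ (n + 1) fun p : ℝ × ℝ × ℝ ↦ u p.1 p.2.1 p.2.2) :
    ContDiff ℝ n fun p : ℝ × ℝ × ℝ ↦ pdy u p.1 p.2.1 p.2.2 := by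
  simpa only [pdy_eq_lineDeriv] using contDiff_lineDeriv hu (0, 1, 0)

theorem contDiff_pdt (hu : ContDiff ℝ (n + 1) fun p : ℝ × ℝ × ℝ ↦ u p.1 p.2.1 p.2.2) :
    ContDiff ℝ n fun p : ℝ × ℝ × ℝ ↦ pdt u p.1 p.2.1 p.2.2 := by
  simpa only [pdt_eq_lineDeriv] using contDiff_lineDeriv hu (0, 0, 1)

theorem pdx3_eq (u : ℝ → ℝ → ℝ → ℝ) : pdx3 u = pdx (pdx (pdx u)) := by
  funext x y t
  simp only [pdx3, iteratedDeriv_succ, iteratedDeriv_zero]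
  rfl

theorem pdy2_eq (u : ℝ → ℝ → ℝ → ℝ) : pdy2 u = pdy (pdy u) := by
  funext x y t
  simp only [pdy2, iteratedDeriv_succ, iteratedDeriv_zero]
  rfl

theorem contDiff_pdx3 (hu : ContDiff ℝ (n + 3) fun p : ℝ × ℝ × ℝ ↦ u p.1 p.2.1 p.2.2) :
    ContDiff ℝ n fun p : ℝ × ℝ × ℝ ↦ pdx3 u p.1 p.2.1 p.2.2 := by
  rw [pdx3_eq]
  exact contDiff_pdx (contDiff_pdx (contDiff_pdx (by convert hu using 1; norm_num [add_assoc])))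

theorem contDiff_pdy2 (hu : ContDiff ℝ (n + 2) fun p : ℝ × ℝ × ℝ ↦ u p.1 p.2.1 p.2.2) :
    ContDiff ℝ n fun p : ℝ × ℝ × ℝ ↦ pdy2 u p.1 p.2.1 p.2.2 := by
  rw [pdy2_eq]
  exact contDiff_pdy (contDiff_pdy (by convert hu using 1; norm_num [add_assoc]))

theorem hasDerivAt_pdx (hu : Differentiable ℝ fun p : ℝ × ℝ × ℝ ↦ u p.1 p.2.1 p.2.2)
    (x y t : ℝ) : HasDerivAt (fun x ↦ u x y t) (pdx u x y t) x :=
  ((by fun_prop : Differentiable ℝ fun x ↦ u x y t) x).hasDerivAt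

theorem hasDerivAt_pdy (hu : Differentiable ℝ fun p : ℝ × ℝ × ℝ ↦ u p.1 p.2.1 p.2.2)
    (x y t : ℝ) : HasDerivAt (fun y ↦ u x y t) (pdy u x y t) y :=
  ((by fun_prop : Differentiable ℝ fun y ↦ u x y t) y).hasDerivAt

theorem hasDerivAt_pdt (hu : Differentiable ℝ fun p : ℝ × ℝ × ℝ ↦ u p.1 p.2.1 p.2.2)
    (x y t : ℝ) : HasDerivAt (fun t ↦ u x y t) (pdt u x y t) t :=
  ((by fun_prop : Differentiable ℝ fun t ↦ u x y t) t).hasDerivAt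

end PartialDerivatives

section InverseDerivative

variable {w w' : ℝ → ℝ → ℝ}

theorem pxInv_eq_integral (L : ℝ) (w : ℝ → ℝ → ℝ) (x y : ℝ) :
    pxInv L w x y = ∫ s in L..x, w s y :=
  (intervalIntegral.integral_symm x L).symm

theorem continuous_pxInv (hw : Continuous (uncurry w)) (L : ℝ) :
    Continuous (uncurry (pxInv L w)) := by
  simp only [uncurry_def, pxInv_eq_integral]
  fun_prop

theorem hasDerivAt_pxInv_left (hw : Continuous (uncurry w)) (L x y : ℝ) :
    HasDerivAt (fun x ↦ pxInv L w x y) (w x y) x := by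
  simp only [pxInv_eq_integral]
  exact ((by fun_prop : Continuous fun s ↦ w s y).integral_hasStrictDerivAt L x).hasDerivAt

theorem hasDerivAt_pxInv_right (hw : Continuous (uncurry w)) (hw' : Continuous (uncurry w'))
    (h : ∀ x y, HasDerivAt (w x) (w' x y) y) (L x y : ℝ) :
    HasDerivAt (pxInv L w x) (pxInv L w' x y) y := by
  simp only [funext (pxInv_eq_integral L w x), pxInv_eq_integral]
  exact hasDerivAt_intervalIntegral_of_continuous (f := fun y s ↦ w s y) (f' := fun y s ↦ w' s y)
    (by fun_prop) (by fun_prop) (fun y s ↦ h s y) L x y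

end InverseDerivative

section Multipliers

variable {φ : ℝ → ℝ}

theorem hasDerivAt_iteratedDeriv_of_contDiff {f : ℝ → ℝ} {n : WithTop ℕ∞} {m : ℕ}
    (hf : ContDiff ℝ n f) (hmn : m < n) (x : ℝ) :
    HasDerivAt (iteratedDeriv m f) (iteratedDeriv (m + 1) f x) x := by
  rw [iteratedDeriv_succ]
  exact (hf.differentiable_iteratedDeriv m hmn x).hasDerivAt

/-- The primitive gathers the boundary terms from integrating `2 φ v v'` and `2 φ v v'''` by parts
until only squares remain under the integral. -/
theorem hasDerivAt_dispersion_primitive {v : ℝ → ℝ} (hφ : ContDiff ℝ 3 φ) (hv : ContDiff ℝ 3 v)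
    (x : ℝ) : HasDerivAt
      (fun x ↦ φ x * v x ^ 2 + 2 * (φ x * (v x * iteratedDeriv 2 v x)) - φ x * deriv v x ^ 2
        - 2 * (deriv φ x * (v x * deriv v x)) + iteratedDeriv 2 φ x * v x ^ 2)
      (2 * φ x * v x * (deriv v x + iteratedDeriv 3 v x)
        - (3 * (deriv φ x * deriv v x ^ 2) - (deriv φ x + iteratedDeriv 3 φ x) * v x ^ 2)) x := by
  have deriv₀ {f : ℝ → ℝ} (hf : ContDiff ℝ 3 f) : HasDerivAt f (deriv f x) x :=
    (hf.differentiable three_ne_zero x).hasDerivAt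
  have deriv₁ {f : ℝ → ℝ} (hf : ContDiff ℝ 3 f) : HasDerivAt (deriv f) (iteratedDeriv 2 f x) x := by
    simpa only [iteratedDeriv_one] using
      hasDerivAt_iteratedDeriv_of_contDiff (m := 1) hf (by norm_num) x
  have deriv₂ {f : ℝ → ℝ} (hf : ContDiff ℝ 3 f) :
      HasDerivAt (iteratedDeriv 2 f) (iteratedDeriv 3 f x) x :=
    hasDerivAt_iteratedDeriv_of_contDiff hf (by norm_num) x
  refine ((((((deriv₀ hφ).mul ((deriv₀ hv).pow 2)).add
    (((deriv₀ hφ).mul ((deriv₀ hv).mul (deriv₂ hv))).const_mul 2)).sub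
    ((deriv₀ hφ).mul ((deriv₁ hv).pow 2))).sub
    (((deriv₁ hφ).mul ((deriv₀ hv).mul (deriv₁ hv))).const_mul 2)).add
    ((deriv₂ hφ).mul ((deriv₀ hv).pow 2))).congr_deriv ?_
  simp only [Pi.pow_apply, Pi.mul_apply]
  ring

theorem integral_weight_mul_dispersion {v : ℝ → ℝ} (hφ : ContDiff ℝ 3 φ) (hv : ContDiff ℝ 3 v)
    {a b : ℝ} (ha : v a = 0) (hb : v b = 0) :
    ∫ x in a..b, 2 * φ x * v x * (deriv v x + iteratedDeriv 3 v x) =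
      φ a * deriv v a ^ 2 - φ b * deriv v b ^ 2 +
        ∫ x in a..b,
          (3 * (deriv φ x * deriv v x ^ 2) - (deriv φ x + iteratedDeriv 3 φ x) * v x ^ 2) := by
  have cφ₁ : Continuous (deriv φ) := hφ.continuous_deriv (by norm_num)
  have cv₁ : Continuous (deriv v) := hv.continuous_deriv (by norm_num)
  have hparts := intervalIntegral.integral_eq_sub_of_hasDerivAt (a := a) (b := b)
    (fun x _ ↦ hasDerivAt_dispersion_primitive hφ hv x)
    (Continuous.intervalIntegrable (by fun_prop) _ _)
  rw [intervalIntegral.integral_sub (Continuous.intervalIntegrable (by fun_prop) _ _)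
    (Continuous.intervalIntegrable (by fun_prop) _ _)] at hparts
  simp only [ha, hb] at hparts
  linarith

theorem integral_weight_mul_deriv_nonpos {v v' : ℝ → ℝ} {a b : ℝ} (hab : a ≤ b)
    (hφ : ContDiff ℝ 1 φ) (hφa : 0 ≤ φ a) (hφ' : ∀ x ∈ Icc a b, 0 ≤ deriv φ x)
    (hv' : Continuous v') (hv : ∀ x, HasDerivAt v (v' x) x) (hvb : v b = 0) :
    ∫ x in a..b, 2 * φ x * v' x * v x ≤ 0 := by
  have cv : Continuous v := continuous_iff_continuousAt.2 fun x ↦ (hv x).continuousAt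
  have hparts : ∫ x in a..b, φ x * (2 * v x * v' x) =
      φ b * v b ^ 2 - φ a * v a ^ 2 - ∫ x in a..b, deriv φ x * v x ^ 2 :=
    intervalIntegral.integral_mul_deriv_eq_deriv_mul
      (fun x _ ↦ (hφ.differentiable one_ne_zero x).hasDerivAt)
      (fun x _ ↦ by simpa using (hv x).pow 2)
      (hφ.continuous_deriv le_rfl |>.intervalIntegrable _ _)
      (Continuous.intervalIntegrable (by fun_prop) _ _)
  have hweight : 0 ≤ ∫ x in a..b, deriv φ x * v x ^ 2 :=
    intervalIntegral.integral_nonneg hab fun x hx ↦ mul_nonneg (hφ' x hx) (sq_nonneg _)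
  calc ∫ x in a..b, 2 * φ x * v' x * v x
      = ∫ x in a..b, φ x * (2 * v x * v' x) := by congr 1 with x; ring
    _ = -(φ a * v a ^ 2) - ∫ x in a..b, deriv φ x * v x ^ 2 := by rw [hparts, hvb]; ring
    _ ≤ 0 := by linarith [mul_nonneg hφa (sq_nonneg (v a))]

theorem integral_weight_mul_pxInv_nonneg {a c d L : ℝ} (haL : a ≤ L) (hcd : c ≤ d)
    (hφ : ContDiff ℝ 1 φ) (hφ0 : ∀ x ∈ Icc a L, 0 ≤ φ x) (hφ' : ∀ x ∈ Icc a L, 0 ≤ deriv φ x)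
    {w w₁ w₂ : ℝ → ℝ → ℝ} (hw : Continuous (uncurry w)) (hw₁ : Continuous (uncurry w₁))
    (hw₂ : Continuous (uncurry w₂)) (h₁ : ∀ x y, HasDerivAt (w x) (w₁ x y) y)
    (h₂ : ∀ x y, HasDerivAt (w₁ x) (w₂ x y) y)
    (hbd : ∀ x ∈ Icc a L, w x c * pxInv L w₁ x c ≤ w x d * pxInv L w₁ x d) :
    0 ≤ ∫ x in a..L, ∫ y in c..d, 2 * φ x * w x y * pxInv L w₂ x y := by
  have cV := continuous_pxInv hw₁ L
  have cW := continuous_pxInv hw₂ L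
  have parts_y : ∀ x ∈ Icc a L, -∫ y in c..d, 2 * φ x * w₁ x y * pxInv L w₁ x y ≤
      ∫ y in c..d, 2 * φ x * w x y * pxInv L w₂ x y := by
    intro x hx
    have := intervalIntegral.integral_mul_deriv_eq_deriv_mul (a := c) (b := d)
      (fun y _ ↦ h₁ x y) (fun y _ ↦ hasDerivAt_pxInv_right hw₁ hw₂ h₂ L x y)
      (Continuous.intervalIntegrable (by fun_prop) _ _)
      (Continuous.intervalIntegrable (by fun_prop) _ _)
    simp only [mul_assoc, intervalIntegral.integral_const_mul, this]
    nlinarith [mul_nonneg (hφ0 x hx) (sub_nonneg.2 (hbd x hx))]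
  have parts_x : ∀ y ∈ Icc c d, ∫ x in a..L, 2 * φ x * w₁ x y * pxInv L w₁ x y ≤ 0 := fun y _ ↦
    integral_weight_mul_deriv_nonpos haL hφ (hφ0 a (left_mem_Icc.2 haL)) hφ' (by fun_prop)
      (fun x ↦ hasDerivAt_pxInv_left hw₁ L x y) (by simp [pxInv])
  calc 0 ≤ ∫ y in c..d, -∫ x in a..L, 2 * φ x * w₁ x y * pxInv L w₁ x y :=
        intervalIntegral.integral_nonneg hcd fun y hy ↦ neg_nonneg.2 (parts_x y hy)
    _ = ∫ x in a..L, -∫ y in c..d, 2 * φ x * w₁ x y * pxInv L w₁ x y := by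
        rw [intervalIntegral.integral_neg, intervalIntegral.integral_neg,
          intervalIntegral_swap_of_continuous (by fun_prop)]
    _ ≤ _ := intervalIntegral.integral_mono_on haL
        (Continuous.intervalIntegrable (by fun_prop) _ _)
        (Continuous.intervalIntegrable (by fun_prop) _ _) parts_y

end Multipliers

section WeightedEnergy

/-- The integral `∫ φ(x) u(x,y,t)² dx dy` over the square `[0,L]²`, as a function of time; for the
constant weight `1` it is twice the energy. -/
def weightedEnergy (L : ℝ) (φ : ℝ → ℝ) (u : ℝ → ℝ → ℝ → ℝ) (t : ℝ) : ℝ :=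
  ∫ x in 0..L, ∫ y in 0..L, φ x * u x y t ^ 2

/-- Weights `φ(x)` whose energy inequality has boundary terms of the right sign under the feedback
law `u_x(L) = α u_x(0)`. -/
structure IsKatoWeight (L α : ℝ) (φ : ℝ → ℝ) : Prop where
  contDiff : ContDiff ℝ 3 φ
  nonneg : ∀ x ∈ Icc 0 L, 0 ≤ φ x
  deriv_nonneg : ∀ x ∈ Icc 0 L, 0 ≤ deriv φ x
  right_mul_sq_le : φ L * α ^ 2 ≤ φ 0

variable {L T α β : ℝ} {φ : ℝ → ℝ} {u : ℝ → ℝ → ℝ → ℝ}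

theorem isKatoWeight_one (hα : |α| ≤ 1) : IsKatoWeight L α 1 where
  contDiff := contDiff_const
  nonneg := by simp
  deriv_nonneg := by simp
  right_mul_sq_le := by simpa using hα

theorem exists_isKatoWeight_add_const (hL : 0 ≤ L) (hα : |α| < 1) :
    ∃ K, 0 ≤ K ∧ IsKatoWeight L α (fun x ↦ x + K) := by
  have hα' : 0 < 1 - α ^ 2 := sub_pos.2 ((sq_lt_one_iff_abs_lt_one α).2 hα)
  have hK : 0 ≤ L * α ^ 2 / (1 - α ^ 2) := by positivity
  refine ⟨L * α ^ 2 / (1 - α ^ 2), hK, by fun_prop, fun x hx ↦ add_nonneg hx.1 hK, by simp, ?_⟩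
  apply le_of_eq
  field_simp
  ring

theorem weightedEnergy_one (L : ℝ) (u : ℝ → ℝ → ℝ → ℝ) (t : ℝ) :
    weightedEnergy L 1 u t = ∫ x in 0..L, ∫ y in 0..L, u x y t ^ 2 := by
  simp only [weightedEnergy, Pi.one_apply, one_mul]

theorem weightedEnergy_nonneg (hL : 0 ≤ L) (hφ : ∀ x ∈ Icc 0 L, 0 ≤ φ x) (t : ℝ) :
    0 ≤ weightedEnergy L φ u t :=
  intervalIntegral.integral_nonneg hL fun x hx ↦
    intervalIntegral.integral_nonneg hL fun _ _ ↦ mul_nonneg (hφ x hx) (sq_nonneg _)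

theorem continuous_weightedEnergy (hφ : Continuous φ)
    (hu : Continuous fun p : ℝ × ℝ × ℝ ↦ u p.1 p.2.1 p.2.2) :
    Continuous (weightedEnergy L φ u) := by
  unfold weightedEnergy
  fun_prop

theorem weightedEnergy_le_mul (hL : 0 ≤ L) (hφ : Continuous φ)
    (hu : Continuous fun p : ℝ × ℝ × ℝ ↦ u p.1 p.2.1 p.2.2) {M : ℝ}
    (hM : ∀ x ∈ Icc 0 L, φ x ≤ M) (t : ℝ) :
    weightedEnergy L φ u t ≤ M * weightedEnergy L 1 u t := by
  simp only [weightedEnergy, Pi.one_apply, one_mul, ← intervalIntegral.integral_const_mul]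
  refine intervalIntegral.integral_mono_on hL (Continuous.intervalIntegrable (by fun_prop) _ _)
    (Continuous.intervalIntegrable (by fun_prop) _ _) fun x hx ↦ ?_
  exact intervalIntegral.integral_mono_on hL (Continuous.intervalIntegrable (by fun_prop) _ _)
    (Continuous.intervalIntegrable (by fun_prop) _ _)
    fun y _ ↦ mul_le_mul_of_nonneg_right (hM x hx) (sq_nonneg _)

theorem integral_sq_add_sq_eq_weightedEnergy_add {v : ℝ → ℝ → ℝ → ℝ}
    (hu : Continuous fun p : ℝ × ℝ × ℝ ↦ u p.1 p.2.1 p.2.2)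
    (hv : Continuous fun p : ℝ × ℝ × ℝ ↦ v p.1 p.2.1 p.2.2) (t : ℝ) :
    ∫ x in 0..L, ∫ y in 0..L, (u x y t ^ 2 + v x y t ^ 2) =
      weightedEnergy L 1 u t + weightedEnergy L 1 v t := by
  rw [weightedEnergy_one, weightedEnergy_one,
    intervalIntegral₂_add (by fun_prop) (by fun_prop)]

theorem hasDerivAt_weightedEnergy (hφ : Continuous φ)
    (hu : ContDiff ℝ 1 fun p : ℝ × ℝ × ℝ ↦ u p.1 p.2.1 p.2.2) (t : ℝ) :
    HasDerivAt (weightedEnergy L φ u)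
      (∫ x in 0..L, ∫ y in 0..L, 2 * φ x * u x y t * pdt u x y t) t := by
  have ct := (contDiff_pdt (n := 0) (by simpa using hu)).continuous
  have hint (x y t : ℝ) :
      HasDerivAt (fun t ↦ φ x * u x y t ^ 2) (2 * φ x * u x y t * pdt u x y t) t := by
    refine (((hasDerivAt_pdt (hu.differentiable one_ne_zero) x y t).pow 2).const_mul
      (φ x)).congr_deriv ?_
    ring
  refine hasDerivAt_intervalIntegral_of_continuous
    (f := fun t x ↦ ∫ y in 0..L, φ x * u x y t ^ 2)
    (f' := fun t x ↦ ∫ y in 0..L, 2 * φ x * u x y t * pdt u x y t)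
    (by fun_prop) (by fun_prop) (fun t x ↦ ?_) 0 L t
  exact hasDerivAt_intervalIntegral_of_continuous (f := fun t y ↦ φ x * u x y t ^ 2)
    (by fun_prop) (by fun_prop) (fun t y ↦ hint x y t) 0 L t

end WeightedEnergy

namespace IsKPSolution

variable {L T α β : ℝ} {φ : ℝ → ℝ} {u : ℝ → ℝ → ℝ → ℝ} {t : ℝ}

theorem weightedEnergy_pdx_sub_le_integral_dispersion (hu : IsKPSolution L T α β u) (hL : 0 ≤ L)
    (hφ : IsKatoWeight L α φ) (ht : t ∈ Icc 0 T) :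
    3 * weightedEnergy L (deriv φ) (pdx u) t -
        weightedEnergy L (fun x ↦ deriv φ x + iteratedDeriv 3 φ x) u t ≤
      ∫ x in 0..L, ∫ y in 0..L, 2 * φ x * u x y t * (pdx u x y t + pdx3 u x y t) := by
  obtain ⟨hC, -, hbx, -⟩ := hu
  have cx := (contDiff_pdx (n := 2) hC).continuous
  have cx3 := (contDiff_pdx3 (n := 0) (by simpa using hC)).continuous
  have cφ := hφ.contDiff.continuous
  have cφ₁ : Continuous (deriv φ) := hφ.contDiff.continuous_deriv (by norm_num)
  have cφ₃ : Continuous (iteratedDeriv 3 φ) := hφ.contDiff.continuous_iteratedDeriv' 3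
  simp only [weightedEnergy, ← intervalIntegral.integral_const_mul]
  rw [← intervalIntegral₂_sub (by fun_prop) (by fun_prop),
    intervalIntegral_swap_of_continuous (by fun_prop),
    intervalIntegral_swap_of_continuous
      (f := fun x y ↦ 2 * φ x * u x y t * (pdx u x y t + pdx3 u x y t)) (by fun_prop)]
  refine intervalIntegral.integral_mono_on hL (Continuous.intervalIntegrable (by fun_prop) _ _)
    (Continuous.intervalIntegrable (by fun_prop) _ _) fun y hy ↦ ?_
  obtain ⟨h0, hL0, hα⟩ := hbx y hy t ht
  have hparts : ∫ x in 0..L, 2 * φ x * u x y t * (pdx u x y t + pdx3 u x y t) =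
      φ 0 * pdx u 0 y t ^ 2 - φ L * pdx u L y t ^ 2 + ∫ x in 0..L,
        (3 * (deriv φ x * pdx u x y t ^ 2) - (deriv φ x + iteratedDeriv 3 φ x) * u x y t ^ 2) :=
    integral_weight_mul_dispersion hφ.contDiff
      (hC.comp (by fun_prop : ContDiff ℝ 3 fun x : ℝ ↦ (x, y, t))) h0 hL0
  have hbd : 0 ≤ φ 0 * pdx u 0 y t ^ 2 - φ L * pdx u L y t ^ 2 := by
    rw [hα]
    linarith [mul_le_mul_of_nonneg_right hφ.right_mul_sq_le (sq_nonneg (pdx u 0 y t))]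
  linarith

theorem pxInv_pdy_top (hu : IsKPSolution L T α β u) (ht : t ∈ Icc 0 T) {x : ℝ}
    (hx : x ∈ Icc 0 L) : pxInv L (fun s y ↦ pdy u s y t) x L = β * u x L t := by
  obtain ⟨hC, -, hbx, hby⟩ := hu
  have hL : L ∈ Icc 0 L := right_mem_Icc.2 (hx.1.trans hx.2)
  have cx := (contDiff_pdx (n := 2) hC).continuous
  calc pxInv L (fun s y ↦ pdy u s y t) x L
      = ∫ s in L..x, pdy u s L t := pxInv_eq_integral ..
    _ = ∫ s in L..x, β * pdx u s L t :=
        intervalIntegral.integral_congr fun s hs ↦ (hby s (uIcc_subset_Icc hL hx hs) t ht).1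
    _ = β * (u x L t - u L L t) := by
        rw [intervalIntegral.integral_const_mul, intervalIntegral.integral_eq_sub_of_hasDerivAt
          (fun s _ ↦ hasDerivAt_pdx (hC.differentiable three_ne_zero) s L t)
          (Continuous.intervalIntegrable (by fun_prop) _ _)]
    _ = β * u x L t := by rw [(hbx L hL t ht).2.1, sub_zero]

theorem pxInv_pdy_bottom (hu : IsKPSolution L T α β u) (ht : t ∈ Icc 0 T) {x : ℝ}
    (hx : x ∈ Icc 0 L) : pxInv L (fun s y ↦ pdy u s y t) x 0 = 0 := by
  have hL : L ∈ Icc 0 L := right_mem_Icc.2 (hx.1.trans hx.2)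
  calc pxInv L (fun s y ↦ pdy u s y t) x 0
      = ∫ s in L..x, pdy u s 0 t := pxInv_eq_integral ..
    _ = ∫ s in L..x, 0 :=
        intervalIntegral.integral_congr fun s hs ↦ (hu.2.2.2 s (uIcc_subset_Icc hL hx hs) t ht).2
    _ = 0 := intervalIntegral.integral_zero

theorem integral_weight_mul_pxInv_pdy2_nonneg (hu : IsKPSolution L T α β u) (hL : 0 ≤ L)
    (hβ : 0 ≤ β) (hφ : IsKatoWeight L α φ) (ht : t ∈ Icc 0 T) :
    0 ≤ ∫ x in 0..L, ∫ y in 0..L,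
      2 * φ x * u x y t * pxInv L (fun s y' ↦ pdy2 u s y' t) x y := by
  have hC := hu.1
  have hCy := contDiff_pdy (n := 2) hC
  have cy2 := (contDiff_pdy2 (n := 1) hC).continuous
  refine integral_weight_mul_pxInv_nonneg (w := fun x y ↦ u x y t) hL hL
    (hφ.contDiff.of_le (by norm_num)) hφ.nonneg hφ.deriv_nonneg
    (by fun_prop) (by fun_prop) (by fun_prop)
    (fun x y ↦ hasDerivAt_pdy (hC.differentiable three_ne_zero) x y t)
    (fun x y ↦ pdy2_eq u ▸ hasDerivAt_pdy (hCy.differentiable two_ne_zero) x y t)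
    fun x hx ↦ ?_
  rw [hu.pxInv_pdy_bottom ht hx, hu.pxInv_pdy_top ht hx]
  linarith [mul_nonneg hβ (sq_nonneg (u x L t))]

theorem integral_weight_mul_pdt_eq (hu : IsKPSolution L T α β u) (hL : 0 ≤ L) (hφ : Continuous φ)
    (ht : t ∈ Ioo 0 T) :
    ∫ x in 0..L, ∫ y in 0..L, 2 * φ x * u x y t * pdt u x y t =
      -(∫ x in 0..L, ∫ y in 0..L, 2 * φ x * u x y t * (pdx u x y t + pdx3 u x y t)) -
        ∫ x in 0..L, ∫ y in 0..L,
          2 * φ x * u x y t * pxInv L (fun s y' ↦ pdy2 u s y' t) x y := by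
  obtain ⟨hC, hpde, -, -⟩ := hu
  have cx := (contDiff_pdx (n := 2) hC).continuous
  have cx3 := (contDiff_pdx3 (n := 0) (by simpa using hC)).continuous
  have cy2 := (contDiff_pdy2 (n := 1) hC).continuous
  have cW := continuous_pxInv (w := fun s y ↦ pdy2 u s y t) (by fun_prop) L
  simp only [← intervalIntegral.integral_neg]
  rw [← intervalIntegral₂_sub (by fun_prop) (by fun_prop)]
  refine intervalIntegral.integral_congr_Ioo_of_le hL fun x hx ↦
    intervalIntegral.integral_congr_Ioo_of_le hL fun y hy ↦ ?_
  linear_combination (2 * φ x * u x y t) * hpde x hx y hy t ht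

theorem weightedEnergy_deriv_le (hu : IsKPSolution L T α β u) (hL : 0 ≤ L) (hβ : 0 ≤ β)
    (hφ : IsKatoWeight L α φ) (ht : t ∈ Ioo 0 T) :
    ∫ x in 0..L, ∫ y in 0..L, 2 * φ x * u x y t * pdt u x y t ≤
      weightedEnergy L (fun x ↦ deriv φ x + iteratedDeriv 3 φ x) u t -
        3 * weightedEnergy L (deriv φ) (pdx u) t := by
  have ht' := Ioo_subset_Icc_self ht
  rw [hu.integral_weight_mul_pdt_eq hL hφ.contDiff.continuous ht]
  linarith [hu.weightedEnergy_pdx_sub_le_integral_dispersion hL hφ ht',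
    hu.integral_weight_mul_pxInv_pdy2_nonneg hL hβ hφ ht']

theorem weightedEnergy_sub_le (hu : IsKPSolution L T α β u) (hL : 0 ≤ L) (hβ : 0 ≤ β)
    (hφ : IsKatoWeight L α φ) (ht : t ∈ Icc 0 T) :
    weightedEnergy L φ u t - weightedEnergy L φ u 0 ≤
      ∫ s in 0..t, (weightedEnergy L (fun x ↦ deriv φ x + iteratedDeriv 3 φ x) u s -
        3 * weightedEnergy L (deriv φ) (pdx u) s) := by
  have hC := hu.1
  have c := hC.continuous
  have ct := (contDiff_pdt (n := 2) hC).continuous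
  have cφ := hφ.contDiff.continuous
  have cφ₁ : Continuous (deriv φ) := hφ.contDiff.continuous_deriv (by norm_num)
  have cφ₃ : Continuous (iteratedDeriv 3 φ) := hφ.contDiff.continuous_iteratedDeriv' 3
  have cE := continuous_weightedEnergy (L := L) (cφ₁.add cφ₃) c
  have cEx := continuous_weightedEnergy (L := L) cφ₁ (contDiff_pdx (n := 2) hC).continuous
  rw [← intervalIntegral.integral_eq_sub_of_hasDerivAt
    (fun s _ ↦ hasDerivAt_weightedEnergy cφ (hC.of_le (by norm_num)) s)
    (Continuous.intervalIntegrable (by fun_prop) _ _)]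
  exact intervalIntegral.integral_mono_on_of_le_Ioo ht.1
    (Continuous.intervalIntegrable (by fun_prop) _ _)
    (Continuous.intervalIntegrable (by fun_prop) _ _)
    fun s hs ↦ hu.weightedEnergy_deriv_le hL hβ hφ ⟨hs.1, hs.2.trans_le ht.2⟩

theorem weightedEnergy_one_le (hu : IsKPSolution L T α β u) (hL : 0 ≤ L) (hα : |α| ≤ 1)
    (hβ : 0 ≤ β) (ht : t ∈ Icc 0 T) : weightedEnergy L 1 u t ≤ weightedEnergy L 1 u 0 := by
  have h := hu.weightedEnergy_sub_le hL hβ (isKatoWeight_one hα) ht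
  simpa [weightedEnergy, Pi.one_def, iteratedDeriv_const] using h

theorem integral_weightedEnergy_one_le (hu : IsKPSolution L T α β u) (hL : 0 ≤ L) (hT : 0 ≤ T)
    (hα : |α| ≤ 1) (hβ : 0 ≤ β) :
    ∫ t in 0..T, weightedEnergy L 1 u t ≤ T * weightedEnergy L 1 u 0 := by
  have cE := continuous_weightedEnergy (L := L) continuous_one hu.1.continuous
  calc ∫ t in 0..T, weightedEnergy L 1 u t
      ≤ ∫ _ in 0..T, weightedEnergy L 1 u 0 :=
        intervalIntegral.integral_mono_on hT (cE.intervalIntegrable _ _) intervalIntegrable_const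
          fun _ ht ↦ hu.weightedEnergy_one_le hL hα hβ ht
    _ = T * weightedEnergy L 1 u 0 := by simp

theorem integral_weightedEnergy_pdx_le (hu : IsKPSolution L T α β u) (hL : 0 ≤ L) (hT : 0 ≤ T)
    (hβ : 0 ≤ β) {K : ℝ} (hK : IsKatoWeight L α fun x ↦ x + K) :
    3 * ∫ t in 0..T, weightedEnergy L 1 (pdx u) t ≤
      (∫ t in 0..T, weightedEnergy L 1 u t) + (L + K) * weightedEnergy L 1 u 0 := by
  have c := hu.1.continuous
  have cE := continuous_weightedEnergy (L := L) continuous_one c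
  have cEx := continuous_weightedEnergy (L := L) continuous_one
    (contDiff_pdx (n := 2) hu.1).continuous
  have hderiv : deriv (fun x ↦ x + K) = 1 := by ext; simp
  have hderiv3 : iteratedDeriv 3 (fun x ↦ x + K) = 0 := by
    ext; simp [iteratedDeriv_succ', hderiv]
  have hkato := hu.weightedEnergy_sub_le hL hβ hK (right_mem_Icc.2 hT)
  simp only [hderiv, hderiv3, Pi.zero_apply, add_zero] at hkato
  rw [intervalIntegral.integral_sub (cE.intervalIntegrable _ _)
    ((cEx.const_mul 3).intervalIntegrable _ _), intervalIntegral.integral_const_mul] at hkato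
  have hinit := weightedEnergy_le_mul hL (by fun_prop) c
    (fun x hx ↦ add_le_add_left hx.2 K : ∀ x ∈ Icc 0 L, x + K ≤ L + K) 0
  linarith [weightedEnergy_nonneg (u := u) hL hK.nonneg T]

end IsKPSolution

/-- Kato smoothing estimate: there is a constant `C = C(L,T,α,β) > 0` such that every
classical solution of the closed-loop linear KP-II system satisfies
`∫₀^T ∫_Ω (u² + u_x²) dx dy dt ≤ C ∫_Ω u(·,·,0)² dx dy`. -/
theorem kp_kato_smoothing (L T α β : ℝ) (hL : 0 < L) (hT : 0 < T)
    (hα0 : 0 < |α|) (hα1 : |α| < 1) (hβ : 0 < β) :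
    ∃ C > (0:ℝ), ∀ u : ℝ → ℝ → ℝ → ℝ, IsKPSolution L T α β u →
      (∫ t in (0:ℝ)..T, ∫ x in (0:ℝ)..L, ∫ y in (0:ℝ)..L,
          ((u x y t)^2 + (pdx u x y t)^2))
        ≤ C * ∫ x in (0:ℝ)..L, ∫ y in (0:ℝ)..L, (u x y 0)^2 := by
  obtain ⟨K, hK, hweight⟩ := exists_isKatoWeight_add_const hL.le hα1
  refine ⟨(4 * T + (L + K)) / 3, by positivity, fun u hu ↦ ?_⟩
  have cu := hu.1.continuous
  have cux := (contDiff_pdx (n := 2) hu.1).continuous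
  have hmass := hu.integral_weightedEnergy_one_le hL.le hT.le hα1.le hβ.le
  have hgrad := hu.integral_weightedEnergy_pdx_le hL.le hT.le hβ.le hweight
  simp only [integral_sq_add_sq_eq_weightedEnergy_add cu cux, ← weightedEnergy_one]
  rw [intervalIntegral.integral_add
    ((continuous_weightedEnergy continuous_one cu).intervalIntegrable _ _)
    ((continuous_weightedEnergy continuous_one cux).intervalIntegrable _ _)]
  linarith

end
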